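/- Let n ≥ 3 and let D_n = ⟨x, y | x² = y² = (xy)ⁿ = 1⟩ be the dihedral group of order 2n. Then every irreducible representation ρ: D_n → PSL₂(ℂ) is conjugate to one with image in N (the classes of matrices that are diagonal or have zero diagonal), and up to conjugation there are exactly ⌊n/2⌋ irreducible representations D_n → PSL₂(ℂ) (equivalently, ⌊n/2⌋ irreducible PSL₂(ℂ)-characters of D_n), distinguished by the value trace²(ρ(xy)) = 4cos²(πk/n), 1 ≤ k ≤ ⌊n/2⌋, gcd with n giving order n/gcd(k,n) of ρ(xy). -/

import Mathlib

noncomputable section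

abbrev SL2C := Matrix.SpecialLinearGroup (Fin 2) ℂ

/-- `PSL₂(ℂ) = SL₂(ℂ)/{±I}`. -/
abbrev PSL2C := SL2C ⧸ Subgroup.center SL2C

/-- An element of `PSL₂(ℂ)` is diagonal if it is the class of a diagonal matrix. -/
def IsDiagClass (g : PSL2C) : Prop :=
  ∃ A : SL2C, (QuotientGroup.mk A : PSL2C) = g ∧ A.1 0 1 = 0 ∧ A.1 1 0 = 0

/-- An element of `PSL₂(ℂ)` is the class of a matrix with both diagonal entries `0`. -/
def IsAntiDiagClass (g : PSL2C) : Prop :=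
  ∃ A : SL2C, (QuotientGroup.mk A : PSL2C) = g ∧ A.1 0 0 = 0 ∧ A.1 1 1 = 0

/-- Membership in `N ⊂ PSL₂(ℂ)`: the class of a diagonal or antidiagonal matrix. -/
def MemN (g : PSL2C) : Prop := IsDiagClass g ∨ IsAntiDiagClass g

/-- A representation `ρ : D_n → PSL₂(ℂ)` is reducible if all the elements of its image
have a common eigenvector (fixed point on `ℂP¹`); irreducible means not reducible. -/
def IsRedRep {n : ℕ} (ρ : DihedralGroup n →* PSL2C) : Prop :=
  ∃ v : Fin 2 → ℂ, v ≠ 0 ∧ ∀ g : DihedralGroup n, ∃ (A : SL2C) (cc : ℂ),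
    (QuotientGroup.mk A : PSL2C) = ρ g ∧ A.1.mulVec v = cc • v

/-- Two representations are conjugate if they differ by conjugation by an element of
`PSL₂(ℂ)`. -/
def RepConj {n : ℕ} (ρ σ : DihedralGroup n →* PSL2C) : Prop :=
  ∃ u : PSL2C, ∀ g, σ g = u * ρ g * u⁻¹

lemma sq_eq_one_iff_of_side (x : ℂ) (h : x ^ 2 = 1) : x = 1 ∨ x = -1 := sq_eq_one_iff.mp h

open DihedralGroup

lemma psl_mk_eq_iff (A B : SL2C) :
    (QuotientGroup.mk A : PSL2C) = QuotientGroup.mk B ↔ (A = B ∨ A = -B) := by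
  rw [QuotientGroup.eq, Matrix.SpecialLinearGroup.mem_center_iff]
  constructor
  · rintro ⟨r, hr, h⟩
    have hr2 : r ^ 2 = 1 := by simpa using hr
    rcases sq_eq_one_iff_of_side _ hr2 with rfl | rfl
    · left
      have : A⁻¹ * B = 1 := by
        apply Subtype.ext
        rw [← h]; simp
      exact (inv_mul_eq_one.mp this)
    · right
      have : A⁻¹ * B = -1 := by
        apply Subtype.ext
        rw [← h]; ext i j; fin_cases i <;> fin_cases j <;> simp
      have h2 : B = A * (-1) := by rw [← this]; simp
      rw [h2]; simp
  · rintro (rfl | rfl)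
    · exact ⟨1, by simp, by simp⟩
    · refine ⟨-1, by simp, ?_⟩
      have : (-B)⁻¹ * B = -1 := by
        rw [inv_mul_eq_iff_eq_mul]; simp
      rw [this]; ext i j; fin_cases i <;> fin_cases j <;> simp

def dMat (z : ℂˣ) : SL2C := ⟨!![(z : ℂ), 0; 0, ((z⁻¹ : ℂˣ) : ℂ)], by simp [Matrix.det_fin_two]⟩

def jMat : SL2C := ⟨!![0, 1; -1, 0], by simp [Matrix.det_fin_two]⟩

lemma dMat_val (z : ℂˣ) : (dMat z).1 = !![(z : ℂ), 0; 0, (z : ℂ)⁻¹] := by simp [dMat]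

lemma jMat_val : jMat.1 = !![0, 1; -1, 0] := rfl

lemma sl_mul_val (A B : SL2C) : (A * B).1 = A.1 * B.1 := rfl

lemma sl_neg_val (A : SL2C) : (-A).1 = -A.1 := rfl

lemma dMat_mul (z w : ℂˣ) : dMat (z * w) = dMat z * dMat w := by
  apply Subtype.ext
  simp [dMat_val, mul_comm]

lemma dMat_one : dMat 1 = 1 := by
  apply Subtype.ext
  simp [dMat, Matrix.one_fin_two]

lemma dMat_pow (z : ℂˣ) (k : ℕ) : dMat z ^ k = dMat (z ^ k) := by
  induction k with
  | zero => simp [dMat_one]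
  | succ k ih => rw [pow_succ, pow_succ, dMat_mul, ih]

lemma dMat_neg (z : ℂˣ) : dMat (-z) = -dMat z := by
  apply Subtype.ext
  simp [dMat_val, inv_neg]

lemma dMat_inv (z : ℂˣ) : dMat z⁻¹ = (dMat z)⁻¹ := by
  rw [eq_inv_iff_mul_eq_one, ← dMat_mul]; simp [dMat_one]

lemma jMat_sq : jMat * jMat = -1 := by
  apply Subtype.ext
  simp [jMat_val, Matrix.one_fin_two]

lemma jMat_dMat (z : ℂˣ) : jMat * dMat z = dMat z⁻¹ * jMat := by
  apply Subtype.ext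
  simp [jMat_val, dMat_val]

abbrev dP (z : ℂˣ) : PSL2C := QuotientGroup.mk (dMat z)
abbrev jP : PSL2C := QuotientGroup.mk jMat

lemma mk_neg' (A : SL2C) : (QuotientGroup.mk (-A) : PSL2C) = QuotientGroup.mk A :=
  (psl_mk_eq_iff _ _).2 (Or.inr rfl)

lemma dP_neg (z : ℂˣ) : dP (-z) = dP z := by rw [dP, dMat_neg, mk_neg']

lemma dP_mul (z w : ℂˣ) : dP (z * w) = dP z * dP w := by
  rw [dP, dMat_mul, QuotientGroup.mk_mul]

lemma dP_inv (z : ℂˣ) : dP z⁻¹ = (dP z)⁻¹ := by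
  rw [dP, dMat_inv, QuotientGroup.mk_inv]

lemma dP_pow (z : ℂˣ) (k : ℕ) : dP (z ^ k) = dP z ^ k := by
  rw [dP, ← dMat_pow, QuotientGroup.mk_pow]

lemma dP_one : dP 1 = 1 := by rw [dP, dMat_one, QuotientGroup.mk_one]

lemma jP_sq : jP * jP = 1 := by
  rw [jP, ← QuotientGroup.mk_mul, jMat_sq, mk_neg', QuotientGroup.mk_one]

lemma jP_dP (z : ℂˣ) : jP * dP z = dP z⁻¹ * jP := by
  rw [jP, dP, dP, ← QuotientGroup.mk_mul, ← QuotientGroup.mk_mul, jMat_dMat]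

lemma jP_inv : jP⁻¹ = jP := by rw [inv_eq_iff_mul_eq_one, jP_sq]

/-! ### Homs out of the dihedral group -/

lemma r_eq_pow {n : ℕ} [NeZero n] (i : ZMod n) : (r i : DihedralGroup n) = r 1 ^ i.val := by
  rw [r_one_pow, ZMod.natCast_zmod_val]

lemma sr_eq_pow {n : ℕ} [NeZero n] (i : ZMod n) :
    (sr i : DihedralGroup n) = sr 0 * r 1 ^ i.val := by
  rw [← r_eq_pow, sr_mul_r, zero_add]

lemma dih_cases {n : ℕ} [NeZero n] (g : DihedralGroup n) :
    ∃ k : ℕ, g = r 1 ^ k ∨ g = sr 0 * r 1 ^ k := by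
  cases g with
  | r i => exact ⟨i.val, Or.inl (r_eq_pow i)⟩
  | sr i => exact ⟨i.val, Or.inr (sr_eq_pow i)⟩

def stdRep (n : ℕ) (z : ℂˣ) (hz : z ^ (2 * n) = 1) : DihedralGroup n →* PSL2C :=
  let φ : ZMod n →+ Additive PSL2C :=
    ZMod.lift n ⟨zmultiplesHom _ (Additive.ofMul (dP z)), by
      have h : z ^ n = 1 ∨ z ^ n = -1 := by
        have h : (z ^ n) ^ 2 = 1 := by rw [← pow_mul, mul_comm, hz]
        have h' : ((z ^ n : ℂˣ) : ℂ) ^ 2 = 1 := by rw [← Units.val_pow_eq_pow_val, h]; simp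
        rcases sq_eq_one_iff_of_side _ h' with h | h
        · left; exact Units.ext h
        · right; exact Units.ext h
      rw [zmultiplesHom_apply, natCast_zsmul, ← ofMul_pow, ← dP_pow]
      rcases h with h | h
      · rw [h, dP_one]; rfl
      · rw [h, dP_neg, dP_one]; rfl⟩
  have hφ : ∀ i, ∃ w, Additive.toMul (φ i) = dP w := by
    intro i
    obtain ⟨k, rfl⟩ := ZMod.intCast_surjective i
    refine ⟨z ^ k, ?_⟩
    rw [ZMod.lift_coe]
    change Additive.toMul (zmultiplesHom _ (Additive.ofMul (dP z)) k) = _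
    rw [zmultiplesHom_apply, toMul_zsmul, toMul_ofMul]
    cases k with
    | ofNat k => simp [← dP_pow]
    | negSucc k => simp only [zpow_negSucc, dP_inv, ← dP_pow]
  MonoidHom.mk' (fun g => match g with
    | r i => Additive.toMul (φ i)
    | sr i => jP * Additive.toMul (φ i)) (by
    have key : ∀ i, Additive.toMul (φ i) * jP = jP * (Additive.toMul (φ i))⁻¹ := by
      intro i
      obtain ⟨w, hw⟩ := hφ i
      rw [hw, ← dP_inv, jP_dP, inv_inv]
    have comm : ∀ i j, Additive.toMul (φ (j - i)) = (Additive.toMul (φ i))⁻¹ * Additive.toMul (φ j) := by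
      intro i j
      rw [sub_eq_neg_add, map_add, map_neg, toMul_add, toMul_neg]
    rintro (i | i) (j | j)
    · simp
    · simp only [r_mul_sr, comm]
      rw [← mul_assoc, ← mul_assoc, key]
    · simp [mul_assoc]
    · simp only [sr_mul_sr, comm]
      rw [← mul_assoc, mul_assoc jP, key, ← mul_assoc, jP_sq, one_mul])


lemma stdRep_r (n : ℕ) (z : ℂˣ) (hz : z ^ (2 * n) = 1) : stdRep n z hz (r 1) = dP z := by
  have : (1 : ZMod n) = ((1 : ℤ) : ZMod n) := by simp
  simp only [stdRep, MonoidHom.mk'_apply]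
  rw [this, ZMod.lift_coe]
  change Additive.toMul (zmultiplesHom _ (Additive.ofMul (dP z)) 1) = _
  simp

lemma stdRep_sr (n : ℕ) (z : ℂˣ) (hz : z ^ (2 * n) = 1) : stdRep n z hz (sr 0) = jP := by
  simp [stdRep]

/-- normal form -/
def NF {n : ℕ} (ρ : DihedralGroup n →* PSL2C) (z : ℂˣ) : Prop :=
  ∃ u : PSL2C, u * ρ (r 1) * u⁻¹ = dP z ∧ u * ρ (sr 0) * u⁻¹ = jP

lemma NF_stdRep (n : ℕ) (z : ℂˣ) (hz : z ^ (2 * n) = 1) : NF (stdRep n z hz) z :=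
  ⟨1, by simp [stdRep_r], by simp [stdRep_sr]⟩

lemma NF.conj {n : ℕ} [NeZero n] {ρ σ : DihedralGroup n →* PSL2C} {z : ℂˣ}
    (h1 : NF ρ z) (h2 : NF σ z) : RepConj ρ σ := by
  obtain ⟨u, hu, hu'⟩ := h1
  obtain ⟨w, hw, hw'⟩ := h2
  have e1 : σ (r 1) = MulAut.conj (w⁻¹ * u) (ρ (r 1)) := by
    have : σ (r 1) = w⁻¹ * (w * σ (r 1) * w⁻¹) * w := by group
    rw [this, hw, ← hu, MulAut.conj_apply]; group
  have e2 : σ (sr 0) = MulAut.conj (w⁻¹ * u) (ρ (sr 0)) := by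
    have : σ (sr 0) = w⁻¹ * (w * σ (sr 0) * w⁻¹) * w := by group
    rw [this, hw', ← hu', MulAut.conj_apply]; group
  refine ⟨w⁻¹ * u, fun g => ?_⟩
  rw [← MulAut.conj_apply]
  obtain ⟨k, rfl | rfl⟩ := dih_cases g
  · simp only [map_pow, e1]
  · simp only [map_pow, map_mul, e1, e2]

lemma NF.neg {n : ℕ} {ρ : DihedralGroup n →* PSL2C} {z : ℂˣ} (h : NF ρ z) : NF ρ (-z) := by
  obtain ⟨u, hu, hu'⟩ := h
  exact ⟨u, by rw [hu, dP_neg], hu'⟩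

lemma NF.inv {n : ℕ} {ρ : DihedralGroup n →* PSL2C} {z : ℂˣ} (h : NF ρ z) : NF ρ z⁻¹ := by
  obtain ⟨u, hu, hu'⟩ := h
  refine ⟨jP * u, ?_, ?_⟩
  · have : jP * u * ρ (r 1) * (jP * u)⁻¹ = jP * (u * ρ (r 1) * u⁻¹) * jP⁻¹ := by group
    rw [this, hu, jP_dP, mul_inv_cancel_right]
  · have : jP * u * ρ (sr 0) * (jP * u)⁻¹ = jP * (u * ρ (sr 0) * u⁻¹) * jP⁻¹ := by group
    rw [this, hu', mul_inv_cancel_right]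

lemma NF.of_sq {n : ℕ} {ρ : DihedralGroup n →* PSL2C} {z w : ℂˣ} (h : NF ρ z)
    (hw : w ^ 2 = z ^ 2) : NF ρ w := by
  have h' : (w : ℂ) ^ 2 = (z : ℂ) ^ 2 := by exact_mod_cast congrArg Units.val hw
  rcases sq_eq_sq_iff_eq_or_eq_neg.mp h' with e | e
  · rw [show w = z from Units.ext e]; exact h
  · rw [show w = -z from Units.ext (by simpa using e)]; exact h.neg

lemma NF.of_sq' {n : ℕ} {ρ : DihedralGroup n →* PSL2C} {z w : ℂˣ} (h : NF ρ z)
    (hw : w ^ 2 = z ^ 2 ∨ w ^ 2 * z ^ 2 = 1) : NF ρ w := by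
  rcases hw with hw | hw
  · exact h.of_sq hw
  · exact h.inv.of_sq (by rw [inv_pow]; exact eq_inv_of_mul_eq_one_left hw)

/-! ### trace -/
lemma trace_sq_of_mk {A B : SL2C} (h : (QuotientGroup.mk A : PSL2C) = QuotientGroup.mk B) :
    (Matrix.trace A.1) ^ 2 = (Matrix.trace B.1) ^ 2 := by
  rcases (psl_mk_eq_iff _ _).1 h with rfl | rfl
  · rfl
  · rw [sl_neg_val, Matrix.trace_neg, neg_sq]

lemma trace_conj' (A P : SL2C) : Matrix.trace (P * A * P⁻¹).1 = Matrix.trace A.1 := by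
  rw [sl_mul_val, Matrix.trace_mul_comm, ← sl_mul_val, ← mul_assoc, inv_mul_cancel, one_mul]

lemma trace_conj_mk {A B : SL2C} {u : PSL2C}
    (h : (QuotientGroup.mk B : PSL2C) = u * QuotientGroup.mk A * u⁻¹) :
    (Matrix.trace A.1) ^ 2 = (Matrix.trace B.1) ^ 2 := by
  obtain ⟨P, rfl⟩ := QuotientGroup.mk_surjective u
  rw [← QuotientGroup.mk_inv, ← QuotientGroup.mk_mul, ← QuotientGroup.mk_mul] at h
  rw [trace_sq_of_mk h, trace_conj']

lemma trace_dMat_sq (z : ℂˣ) : (Matrix.trace (dMat z).1) ^ 2 = (z : ℂ) ^ 2 + 2 + ((z : ℂ) ^ 2)⁻¹ := by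
  have := z.ne_zero
  rw [dMat_val, Matrix.trace_fin_two]; simp; field_simp; ring

lemma trace_dMat_eq {z w : ℂˣ}
    (h : (Matrix.trace (dMat z).1) ^ 2 = (Matrix.trace (dMat w).1) ^ 2) :
    w ^ 2 = z ^ 2 ∨ w ^ 2 * z ^ 2 = 1 := by
  have hz := z.ne_zero
  have hw := w.ne_zero
  rw [trace_dMat_sq, trace_dMat_sq] at h
  have : ((w : ℂ) ^ 2 - (z : ℂ) ^ 2) * ((w : ℂ) ^ 2 * (z : ℂ) ^ 2 - 1) = 0 := by
    field_simp at h
    linear_combination -h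
  rcases mul_eq_zero.mp this with h | h
  · left; apply Units.ext; push_cast; exact sub_eq_zero.mp h
  · right; apply Units.ext; push_cast; exact sub_eq_zero.mp h

lemma NF.trace {n : ℕ} {ρ : DihedralGroup n →* PSL2C} {z : ℂˣ} (h : NF ρ z) {A : SL2C}
    (hA : (QuotientGroup.mk A : PSL2C) = ρ (r 1)) :
    (Matrix.trace A.1) ^ 2 = (Matrix.trace (dMat z).1) ^ 2 := by
  obtain ⟨u, hu, -⟩ := h
  apply trace_conj_mk (u := u)
  rw [hA, hu]

/-! ### reducibility -/
lemma red_conj {n : ℕ} {ρ σ : DihedralGroup n →* PSL2C} (h : RepConj ρ σ) (hσ : IsRedRep σ) :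
    IsRedRep ρ := by
  obtain ⟨u, hu⟩ := h
  obtain ⟨P, rfl⟩ := QuotientGroup.mk_surjective u
  obtain ⟨v, hv, H⟩ := hσ
  have hP : P.1.mulVec ((P⁻¹).1.mulVec v) = v := by
    rw [Matrix.mulVec_mulVec, ← sl_mul_val, mul_inv_cancel]; simp
  refine ⟨(P⁻¹).1.mulVec v, ?_, fun g => ?_⟩
  · intro h0
    rw [h0] at hP; simp at hP; exact hv hP.symm
  · obtain ⟨A, c, hA, hAv⟩ := H g
    refine ⟨P⁻¹ * A * P, c, ?_, ?_⟩
    · rw [QuotientGroup.mk_mul, QuotientGroup.mk_mul, hA, hu, QuotientGroup.mk_inv]; group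
    · rw [sl_mul_val, ← Matrix.mulVec_mulVec, hP, sl_mul_val, ← Matrix.mulVec_mulVec, hAv,
        Matrix.mulVec_smul]

lemma pow_eigen (A : SL2C) (v : Fin 2 → ℂ) (a : ℂ) (h : A.1.mulVec v = a • v) (k : ℕ) :
    (A ^ k).1.mulVec v = a ^ k • v := by
  induction k with
  | zero => simp
  | succ k ih =>
    rw [pow_succ, sl_mul_val, ← Matrix.mulVec_mulVec, h, Matrix.mulVec_smul, ih, smul_smul,
      pow_succ, mul_comm]

lemma red_gen {n : ℕ} [NeZero n] {ρ : DihedralGroup n →* PSL2C} (A B : SL2C) (v : Fin 2 → ℂ)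
    (hv : v ≠ 0) (a b : ℂ) (hA : (QuotientGroup.mk A : PSL2C) = ρ (r 1))
    (hB : (QuotientGroup.mk B : PSL2C) = ρ (sr 0))
    (hAv : A.1.mulVec v = a • v) (hBv : B.1.mulVec v = b • v) : IsRedRep ρ := by
  refine ⟨v, hv, fun g => ?_⟩
  obtain ⟨k, rfl | rfl⟩ := dih_cases g
  · exact ⟨A ^ k, a ^ k, by rw [QuotientGroup.mk_pow, hA, map_pow], pow_eigen A v a hAv k⟩
  · refine ⟨B * A ^ k, a ^ k * b, ?_, ?_⟩
    · rw [QuotientGroup.mk_mul, QuotientGroup.mk_pow, hA, hB, map_mul, map_pow]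
    · rw [sl_mul_val, ← Matrix.mulVec_mulVec, pow_eigen A v a hAv k, Matrix.mulVec_smul, hBv,
        smul_smul]

lemma neg_eigen {A B : SL2C} (h : (QuotientGroup.mk A : PSL2C) = QuotientGroup.mk B)
    {v : Fin 2 → ℂ} {a : ℂ} (hv : A.1.mulVec v = a • v) : ∃ b : ℂ, B.1.mulVec v = b • v := by
  rcases (psl_mk_eq_iff _ _).1 h with rfl | rfl
  · exact ⟨a, hv⟩
  · refine ⟨-a, ?_⟩
    rw [sl_neg_val, Matrix.neg_mulVec] at hv
    rw [neg_smul, ← hv, neg_neg]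

lemma stdRep_irr (n : ℕ) (z : ℂˣ) (hz : z ^ (2 * n) = 1) (hz2 : z ^ 2 ≠ 1) :
    ¬ IsRedRep (stdRep n z hz) := by
  rintro ⟨v, hv, H⟩
  obtain ⟨A, a, hA, hAv⟩ := H (r 1)
  obtain ⟨B, b, hB, hBv⟩ := H (sr 0)
  rw [stdRep_r] at hA
  rw [stdRep_sr] at hB
  obtain ⟨c, hc⟩ := neg_eigen hA hAv
  obtain ⟨d, hd⟩ := neg_eigen hB hBv
  rw [dMat_val] at hc
  rw [jMat_val] at hd
  have c0 := congrFun hc 0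
  have c1 := congrFun hc 1
  have d0 := congrFun hd 0
  have d1 := congrFun hd 1
  simp [Matrix.mulVec, dotProduct, Fin.sum_univ_two] at c0 c1 d0 d1
  have h0 : v 0 ≠ 0 := by
    intro h
    apply hv; ext i; fin_cases i
    · simpa using h
    · simp [d0, h]
  have h1 : v 1 ≠ 0 := by
    intro h
    rw [h] at d1; simp at d1; exact h0 d1
  have e0 : (z : ℂ) = c := by rcases c0 with h | h; exacts [h, absurd h h0]
  have e1 : (z : ℂ)⁻¹ = c := by rcases c1 with h | h; exacts [h, absurd h h1]
  apply hz2
  apply Units.ext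
  have : (z : ℂ) * (z : ℂ)⁻¹ = 1 := mul_inv_cancel₀ z.ne_zero
  rw [e1, ← e0] at this
  push_cast
  rw [sq, this]

/-! ### existence of the normal form -/
lemma exists_eigen (A : SL2C) : ∃ (v : Fin 2 → ℂ) (a : ℂ), v ≠ 0 ∧ A.1.mulVec v = a • v := by
  obtain ⟨a, ha⟩ := Module.End.exists_eigenvalue (Matrix.toLin' A.1)
  obtain ⟨v, hv⟩ := ha.exists_hasEigenvector
  exact ⟨v, a, hv.2, by simpa using hv.apply_eq_smul⟩

lemma exists_first_col (v : Fin 2 → ℂ) (hv : v ≠ 0) :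
    ∃ P : SL2C, P.1.mulVec ![1, 0] = v := by
  by_cases h : v 0 = 0
  · have h1 : v 1 ≠ 0 := by
      intro h1; apply hv; ext i; fin_cases i <;> simp [h, h1]
    refine ⟨⟨!![0, -(v 1)⁻¹; v 1, 0], by simp [Matrix.det_fin_two, h1]⟩, ?_⟩
    ext i; fin_cases i <;> simp [Matrix.mulVec, dotProduct, Fin.sum_univ_two, h]
  · refine ⟨⟨!![v 0, 0; v 1, (v 0)⁻¹], by simp [Matrix.det_fin_two, h]⟩, ?_⟩
    ext i; fin_cases i <;> simp [Matrix.mulVec, dotProduct, Fin.sum_univ_two]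

lemma triang (A : SL2C) : ∃ P : SL2C, (P * A * P⁻¹).1 1 0 = 0 := by
  obtain ⟨v, a, hv, hA⟩ := exists_eigen A
  obtain ⟨P, hP⟩ := exists_first_col v hv
  refine ⟨P⁻¹, ?_⟩
  have h : (P⁻¹ * A * P).1.mulVec ![1, 0] = a • ![1, 0] := by
    rw [sl_mul_val, ← Matrix.mulVec_mulVec, hP, sl_mul_val, ← Matrix.mulVec_mulVec, hA,
      Matrix.mulVec_smul, ← hP, Matrix.mulVec_mulVec, ← sl_mul_val, inv_mul_cancel]
    simp
  rw [inv_inv]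
  have := congrFun h 1
  simpa only [Matrix.mulVec, dotProduct, Fin.sum_univ_two, Matrix.cons_val_zero,
    Matrix.cons_val_one, mul_one, mul_zero, add_zero, Pi.smul_apply, smul_eq_mul] using this

lemma sl_det (A : SL2C) : A.1 0 0 * A.1 1 1 - A.1 0 1 * A.1 1 0 = 1 := by
  have := A.2
  rwa [Matrix.det_fin_two] at this

lemma diagonalize (A : SL2C) (h : A.1 1 0 = 0) (h2 : A.1 0 0 ^ 2 ≠ 1) :
    ∃ (P : SL2C) (z : ℂˣ), (z : ℂ) = A.1 0 0 ∧ P * A * P⁻¹ = dMat z := by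
  have hd := sl_det A
  rw [h, mul_zero, sub_zero] at hd
  have hz : A.1 0 0 ≠ 0 := left_ne_zero_of_mul_eq_one hd
  have hw : A.1 1 1 = (A.1 0 0)⁻¹ := eq_inv_of_mul_eq_one_right hd
  have hne : A.1 0 0 - A.1 1 1 ≠ 0 := by
    intro e
    apply h2
    rw [sub_eq_zero] at e
    rw [← e, ← sq] at hd
    exact hd
  obtain ⟨P, hP⟩ : ∃ P : SL2C, P.1 = !![1, A.1 0 1 / (A.1 0 0 - A.1 1 1); 0, 1] :=
    ⟨⟨!![1, A.1 0 1 / (A.1 0 0 - A.1 1 1); 0, 1], by simp [Matrix.det_fin_two]⟩, rfl⟩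
  refine ⟨P, Units.mk0 _ hz, rfl, ?_⟩
  rw [mul_inv_eq_iff_eq_mul]
  apply Subtype.ext
  rw [sl_mul_val, sl_mul_val, dMat_val, hP]
  ext i j
  fin_cases i <;> fin_cases j <;> simp [Matrix.mul_apply, Fin.sum_univ_two, h, hw]
  rw [hw] at hne
  generalize (A.1 0 0)⁻¹ = w at *
  field_simp
  ring

lemma parabolic_pow (A : SL2C) (h : A.1 1 0 = 0) (h2 : A.1 0 0 ^ 2 = 1) (k : ℕ) :
    (A ^ k).1 0 0 = A.1 0 0 ^ k ∧ (A ^ k).1 0 1 = k * A.1 0 0 ^ (k + 1) * A.1 0 1 := by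
  have hd := sl_det A
  rw [h, mul_zero, sub_zero] at hd
  have hw : A.1 1 1 = A.1 0 0 := by
    linear_combination (A.1 0 0) * hd - (A.1 1 1) * h2
  induction k with
  | zero => simp
  | succ k ih =>
    rw [pow_succ, sl_mul_val]
    simp only [Matrix.mul_apply, Fin.sum_univ_two, ih.1, ih.2, h, hw]
    constructor
    · ring
    · push_cast
      linear_combination (-(A.1 0 0) ^ k * A.1 0 1) * h2

lemma parabolic (A : SL2C) (h : A.1 1 0 = 0) (h2 : A.1 0 0 ^ 2 = 1) (n : ℕ) (hn : n ≠ 0)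
    (hA : (QuotientGroup.mk A : PSL2C) ^ n = 1) : (QuotientGroup.mk A : PSL2C) = 1 := by
  have hd := sl_det A
  rw [h, mul_zero, sub_zero] at hd
  have hw : A.1 1 1 = A.1 0 0 := by
    linear_combination (A.1 0 0) * hd - (A.1 1 1) * h2
  have hz : A.1 0 0 ≠ 0 := left_ne_zero_of_mul_eq_one hd
  have hn' : (n : ℂ) ≠ 0 := by exact_mod_cast hn
  have hb : (A ^ n).1 0 1 = 0 := by
    rw [← QuotientGroup.mk_pow, ← QuotientGroup.mk_one, psl_mk_eq_iff] at hA
    rcases hA with e | e <;> rw [e]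
    · simp
    · rw [sl_neg_val]; simp
  rw [(parabolic_pow A h h2 n).2] at hb
  have hb' : A.1 0 1 = 0 := by simpa [hn', hz] using hb
  rw [← QuotientGroup.mk_one, psl_mk_eq_iff]
  rcases sq_eq_one_iff_of_side _ h2 with e | e
  · left; apply Subtype.ext; ext i j
    fin_cases i <;> fin_cases j <;> simp [h, hb', hw, e]
  · right; apply Subtype.ext; rw [sl_neg_val]; ext i j
    fin_cases i <;> fin_cases j <;> simp [h, hb', hw, e]

def conjRep {n : ℕ} (u : PSL2C) (ρ : DihedralGroup n →* PSL2C) : DihedralGroup n →* PSL2C :=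
  (MulAut.conj u).toMonoidHom.comp ρ

lemma conjRep_apply {n : ℕ} (u : PSL2C) (ρ : DihedralGroup n →* PSL2C) (g : DihedralGroup n) :
    conjRep u ρ g = u * ρ g * u⁻¹ := rfl

lemma conjRep_conj {n : ℕ} (u : PSL2C) (ρ : DihedralGroup n →* PSL2C) : RepConj ρ (conjRep u ρ) :=
  ⟨u, conjRep_apply u ρ⟩

lemma anti_of_rel (z : ℂˣ) (hz : (z : ℂ) ^ 2 ≠ 1) (B : SL2C)
    (h : (QuotientGroup.mk (B * dMat z) : PSL2C) = QuotientGroup.mk (dMat z⁻¹ * B)) :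
    (B.1 0 0 = 0 ∧ B.1 1 1 = 0) ∨ (B.1 0 1 = 0 ∧ B.1 1 0 = 0) := by
  have h0 := z.ne_zero
  rcases (psl_mk_eq_iff _ _).1 h with h | h
  · left
    have h := congrArg Subtype.val h
    rw [sl_mul_val, sl_mul_val, dMat_val, dMat_val] at h
    have e0 := congrFun (congrFun h 0) 0
    have e1 := congrFun (congrFun h 1) 1
    simp [Matrix.mul_apply, Fin.sum_univ_two] at e0 e1
    field_simp at e0 e1
    have hz' : (z : ℂ) ^ 2 - 1 ≠ 0 := sub_ne_zero.2 hz
    constructor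
    · apply (mul_eq_zero.mp (_ : ((z : ℂ) ^ 2 - 1) * B.1 0 0 = 0)).resolve_left hz'
      linear_combination e0
    · apply (mul_eq_zero.mp (_ : ((z : ℂ) ^ 2 - 1) * B.1 1 1 = 0)).resolve_left hz'
      linear_combination -e1
  · right
    have h := congrArg Subtype.val h
    rw [sl_neg_val, sl_mul_val, sl_mul_val, dMat_val, dMat_val] at h
    have e0 := congrFun (congrFun h 0) 1
    have e1 := congrFun (congrFun h 1) 0
    simp [Matrix.mul_apply, Matrix.vecMul, dotProduct, Fin.sum_univ_two] at e0 e1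
    constructor
    · field_simp at e0
      linear_combination e0 / 2
    · apply (mul_eq_zero.mp (_ : (z : ℂ) * B.1 1 0 = 0)).resolve_left h0
      linear_combination e1 / 2

lemma anti_conj (B : SL2C) (h0 : B.1 0 0 = 0) (h1 : B.1 1 1 = 0) :
    ∃ w : ℂˣ, dMat w * B * (dMat w)⁻¹ = jMat := by
  have hd := sl_det B
  rw [h0, zero_mul, zero_sub] at hd
  have hb : B.1 0 1 ≠ 0 := by
    intro e; rw [e] at hd; simp at hd
  obtain ⟨w, hw⟩ := IsAlgClosed.exists_pow_nat_eq (B.1 0 1)⁻¹ (n := 2) (by norm_num)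
  have hw0 : w ≠ 0 := by
    rintro rfl
    simp at hw; exact hb hw.symm
  refine ⟨Units.mk0 w hw0, ?_⟩
  rw [mul_inv_eq_iff_eq_mul]
  apply Subtype.ext
  rw [sl_mul_val, sl_mul_val, dMat_val, jMat_val]
  have hw1 : w ^ 2 * B.1 0 1 = 1 := by rw [hw]; exact inv_mul_cancel₀ hb
  ext i j
  fin_cases i <;> fin_cases j <;> simp [Matrix.mul_apply, Fin.sum_univ_two, h0, h1]
  · field_simp; linear_combination hw1
  · field_simp; linear_combination -B.1 1 0 * hw1 - w ^ 2 * hd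

lemma exists_NF {n : ℕ} [NeZero n] (ρ : DihedralGroup n →* PSL2C) (hρ : ¬ IsRedRep ρ) :
    ∃ z : ℂˣ, z ^ (2 * n) = 1 ∧ z ^ 2 ≠ 1 ∧ NF ρ z := by
  obtain ⟨A, hA⟩ := QuotientGroup.mk_surjective (ρ (r 1))
  obtain ⟨P, hP⟩ := triang A
  have hρn : ρ (r 1) ^ n = 1 := by rw [← map_pow, r_one_pow_n, map_one]
  have hc : (QuotientGroup.mk (P * A * P⁻¹) : PSL2C)
      = QuotientGroup.mk P * ρ (r 1) * (QuotientGroup.mk P)⁻¹ := by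
    rw [QuotientGroup.mk_mul, QuotientGroup.mk_mul, hA, QuotientGroup.mk_inv]
  by_cases h2 : (P * A * P⁻¹).1 0 0 ^ 2 = 1
  · exfalso
    have := parabolic _ hP h2 n (NeZero.ne n) (by rw [hc, conj_pow, hρn]; group)
    rw [hc] at this
    have h1 : ρ (r 1) = 1 := by
      rw [mul_inv_eq_one] at this
      simpa using this
    obtain ⟨B, hB⟩ := QuotientGroup.mk_surjective (ρ (sr 0))
    obtain ⟨v, b, hv, hb⟩ := exists_eigen B
    exact hρ (red_gen 1 B v hv 1 b (by rw [h1, QuotientGroup.mk_one]) hB (by simp) hb)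
  · obtain ⟨Q, z, hz, hQ⟩ := diagonalize _ hP h2
    have hz2 : (z : ℂ) ^ 2 ≠ 1 := by rw [hz]; exact h2
    set u : PSL2C := QuotientGroup.mk (Q * P) with hu
    have hσr : conjRep u ρ (r 1) = dP z := by
      rw [conjRep_apply, dP, ← hQ, QuotientGroup.mk_mul, QuotientGroup.mk_mul, hc, hu,
        QuotientGroup.mk_mul, QuotientGroup.mk_inv]
      group
    have hσ : ¬ IsRedRep (conjRep u ρ) := fun h => hρ (red_conj (conjRep_conj u ρ) h)
    obtain ⟨B, hB⟩ := QuotientGroup.mk_surjective (conjRep u ρ (sr 0))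
    have hrel : (QuotientGroup.mk (B * dMat z) : PSL2C) = QuotientGroup.mk (dMat z⁻¹ * B) := by
      rw [QuotientGroup.mk_mul, QuotientGroup.mk_mul, hB, show (QuotientGroup.mk (dMat z⁻¹) : PSL2C) = (dP z)⁻¹ from dP_inv z,
        show (QuotientGroup.mk (dMat z) : PSL2C) = dP z from rfl, ← hσr, ← map_inv, ← map_mul,
        ← map_mul]
      congr 1
      simp
    refine ⟨z, ?_, ?_, ?_⟩
    · have : dP (z ^ n) = 1 := by rw [dP_pow, ← hσr, ← map_pow, r_one_pow_n, map_one]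
      rw [← dP_one, psl_mk_eq_iff] at this
      have h' : z ^ n = 1 ∨ z ^ n = -1 := by
        rw [← dMat_neg] at this
        rcases this with e | e
        · left; apply Units.ext
          have := congrFun (congrFun (congrArg Subtype.val e) 0) 0
          simpa [dMat_val] using this
        · right; apply Units.ext
          have := congrFun (congrFun (congrArg Subtype.val e) 0) 0
          simpa [dMat_val] using this
      rw [mul_comm, pow_mul]
      rcases h' with e | e <;> rw [e] <;> simp
    · intro e; apply hz2; simpa using congrArg Units.val e
    · rcases anti_of_rel z hz2 B hrel with ⟨h0, h1⟩ | ⟨h0, h1⟩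
      · obtain ⟨w, hw⟩ := anti_conj B h0 h1
        refine ⟨dP w * u, ?_, ?_⟩
        · have : dP w * u * ρ (r 1) * (dP w * u)⁻¹ = dP w * (conjRep u ρ (r 1)) * (dP w)⁻¹ := by
            rw [conjRep_apply]; group
          rw [this, hσr, ← dP_mul, ← dP_inv, ← dP_mul]
          congr 2
          rw [mul_comm w z, mul_inv_cancel_right]
        · have : dP w * u * ρ (sr 0) * (dP w * u)⁻¹
              = dP w * (conjRep u ρ (sr 0)) * (dP w)⁻¹ := by
            rw [conjRep_apply]; group
          rw [this, ← hB, jP, ← hw, QuotientGroup.mk_mul, QuotientGroup.mk_mul,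
            QuotientGroup.mk_inv]
      · exfalso
        refine hσ (red_gen (dMat z) B ![1, 0] (by simp) z (B.1 0 0) hσr.symm hB ?_ ?_)
        · rw [dMat_val]
          ext i; fin_cases i <;> simp [Matrix.mulVec, dotProduct, Fin.sum_univ_two]
        · ext i; fin_cases i <;> simp [Matrix.mulVec, dotProduct, Fin.sum_univ_two, h1]

lemma NF.memN {n : ℕ} [NeZero n] {ρ : DihedralGroup n →* PSL2C} {z : ℂˣ} (h : NF ρ z) :
    ∃ σ : DihedralGroup n →* PSL2C, RepConj ρ σ ∧ ∀ g, MemN (σ g) := by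
  obtain ⟨u, hu, hu'⟩ := h
  refine ⟨conjRep u ρ, conjRep_conj u ρ, fun g => ?_⟩
  rw [← conjRep_apply] at hu hu'
  obtain ⟨k, rfl | rfl⟩ := dih_cases g
  · left
    refine ⟨dMat (z ^ k), ?_, ?_, ?_⟩
    · rw [map_pow, hu, ← dP_pow]
    · rw [dMat_val]; simp
    · rw [dMat_val]; simp
  · right
    refine ⟨jMat * dMat (z ^ k), ?_, ?_, ?_⟩
    · rw [map_mul, map_pow, hu, hu', QuotientGroup.mk_mul, ← dP_pow]
    · rw [sl_mul_val, dMat_val, jMat_val]; simp [Matrix.mul_apply, Fin.sum_univ_two]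
    · rw [sl_mul_val, dMat_val, jMat_val]; simp [Matrix.mul_apply, Fin.sum_univ_two]

lemma RepConj.trace {n : ℕ} {ρ σ : DihedralGroup n →* PSL2C} (h : RepConj ρ σ) {A B : SL2C}
    (hA : (QuotientGroup.mk A : PSL2C) = ρ (r 1)) (hB : (QuotientGroup.mk B : PSL2C) = σ (r 1)) :
    (Matrix.trace A.1) ^ 2 = (Matrix.trace B.1) ^ 2 := by
  obtain ⟨u, hu⟩ := h
  apply trace_conj_mk (u := u)
  rw [hA, hB, hu]

lemma exists_zeta (n : ℕ) (hn : n ≠ 0) : ∃ ζ : ℂˣ, IsPrimitiveRoot ζ (2 * n) := by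
  have h := Complex.isPrimitiveRoot_exp (2 * n) (by omega)
  exact ⟨_, h.isUnit_unit (by omega)⟩

/-- For `n ≥ 3`: every irreducible representation `D_n → PSL₂(ℂ)` is conjugate to one
with image in `N`; up to conjugation there are exactly `⌊n/2⌋` irreducible
representations; and irreducible representations are distinguished up to conjugacy by
the value `trace²` at the rotation `xy = r 1`. -/
theorem dihedral_irreps_PSL2 (n : ℕ) (hn : 3 ≤ n) :
    (∀ ρ : DihedralGroup n →* PSL2C, ¬ IsRedRep ρ →
      ∃ σ : DihedralGroup n →* PSL2C, RepConj ρ σ ∧ ∀ g, MemN (σ g)) ∧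
    (∃ f : Fin (n / 2) → (DihedralGroup n →* PSL2C),
      (∀ i, ¬ IsRedRep (f i)) ∧
      (∀ i i', RepConj (f i) (f i') → i = i') ∧
      (∀ ρ : DihedralGroup n →* PSL2C, ¬ IsRedRep ρ → ∃ i, RepConj ρ (f i))) ∧
    (∀ ρ σ : DihedralGroup n →* PSL2C, ¬ IsRedRep ρ → ¬ IsRedRep σ →
      (RepConj ρ σ ↔ ∀ A B : SL2C,
        (QuotientGroup.mk A : PSL2C) = ρ (DihedralGroup.r 1) →
        (QuotientGroup.mk B : PSL2C) = σ (DihedralGroup.r 1) →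
        (Matrix.trace A.1) ^ 2 = (Matrix.trace B.1) ^ 2)) := by
  have : NeZero n := ⟨by omega⟩
  have : NeZero (2 * n) := ⟨by omega⟩
  refine ⟨?_, ?_, ?_⟩
  · intro ρ hρ
    obtain ⟨z, -, -, hz⟩ := exists_NF ρ hρ
    exact hz.memN
  · obtain ⟨ζ, hζ⟩ := exists_zeta n (by omega)
    have hpow : ∀ k : ℕ, (ζ ^ k) ^ (2 * n) = 1 := by
      intro k
      rw [← pow_mul, mul_comm, pow_mul, hζ.pow_eq_one, one_pow]
    refine ⟨fun i => stdRep n (ζ ^ (i.val + 1)) (hpow _), ?_, ?_, ?_⟩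
    · intro i
      apply stdRep_irr
      have := i.2
      rw [← pow_mul, Ne, hζ.pow_eq_one_iff_dvd]
      intro h
      have := Nat.le_of_dvd (by omega) h
      omega
    · intro i j h
      have ht := trace_dMat_eq
        (h.trace (stdRep_r n _ (hpow (i.val + 1))).symm (stdRep_r n _ (hpow (j.val + 1))).symm)
      have hi := i.2
      have hj := j.2
      apply Fin.ext
      rcases ht with h | h
      · rw [← pow_mul, ← pow_mul] at h
        have := hζ.pow_inj (by omega) (by omega) h
        omega
      · rw [← pow_mul, ← pow_mul, ← pow_add, hζ.pow_eq_one_iff_dvd] at h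
        have := Nat.le_of_dvd (by omega) h
        omega
    · intro ρ hρ
      obtain ⟨z, hz, hz2, hN⟩ := exists_NF ρ hρ
      obtain ⟨k, hk, hkz⟩ := (IsPrimitiveRoot.coe_units_iff.mpr hζ).eq_pow_of_pow_eq_one
        (ξ := (z : ℂ)) (by simpa using congrArg Units.val hz)
      have hkz : ζ ^ k = z := Units.ext (by exact_mod_cast hkz)
      subst hkz
      suffices H : ∃ m : ℕ, 1 ≤ m ∧ m ≤ n / 2 ∧
          ((ζ ^ m) ^ 2 = (ζ ^ k) ^ 2 ∨ (ζ ^ m) ^ 2 * (ζ ^ k) ^ 2 = 1) by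
        obtain ⟨m, hm1, hm2, hm⟩ := H
        obtain ⟨m, rfl⟩ : ∃ m', m = m' + 1 := ⟨m - 1, by omega⟩
        exact ⟨⟨m, by omega⟩, (hN.of_sq' hm).conj (NF_stdRep n _ (hpow _))⟩
      rw [← pow_mul, Ne, hζ.pow_eq_one_iff_dvd] at hz2
      have k0 : k ≠ 0 := by rintro rfl; simp at hz2
      have kn : k ≠ n := by rintro rfl; exact hz2 (by rw [mul_comm])
      have hone : ∀ j, (ζ ^ (2 * n)) ^ j = 1 := by intro j; rw [hζ.pow_eq_one, one_pow]
      by_cases c1 : k ≤ n / 2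
      · exact ⟨k, by omega, c1, Or.inl rfl⟩
      by_cases c2 : k < n
      · refine ⟨n - k, by omega, by omega, Or.inr ?_⟩
        rw [← pow_mul, ← pow_mul, ← pow_add, ← hζ.pow_eq_one]; congr 1; omega
      by_cases c3 : k - n ≤ n / 2
      · refine ⟨k - n, by omega, by omega, Or.inl ?_⟩
        rw [← pow_mul, ← pow_mul, ← mul_one (ζ ^ ((k - n) * 2)), ← hζ.pow_eq_one, ← pow_add]
        congr 1; omega
      · refine ⟨2 * n - k, by omega, by omega, Or.inr ?_⟩
        rw [← pow_mul, ← pow_mul, ← pow_add, ← hone 2, ← pow_mul]; congr 1; omega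
  · intro ρ σ hρ hσ
    constructor
    · intro h A B hA hB
      exact h.trace hA hB
    · intro h
      obtain ⟨z, -, -, hz⟩ := exists_NF ρ hρ
      obtain ⟨w, -, -, hw⟩ := exists_NF σ hσ
      obtain ⟨A, hA⟩ := QuotientGroup.mk_surjective (ρ (r 1))
      obtain ⟨B, hB⟩ := QuotientGroup.mk_surjective (σ (r 1))
      have ht := h A B hA hB
      rw [hz.trace hA, hw.trace hB] at ht
      exact (hz.of_sq' (trace_dMat_eq ht)).conj hw

end
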